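/- Let G be a connected graph on n ≥ 12 vertices and let 1/2 ≤ α < 1. Then S_2(A_α(G)) ≥ S_2(A_α(P_n)), where P_n is the path on n vertices, with equality if and only if G is isomorphic to P_n. -/

import Mathlib

open Matrix Finset Real

/-- The `A_α`-matrix of a graph: `A_α(G) = α·D(G) + (1−α)·A(G)`. -/
noncomputable def Aalpha {n : ℕ} (α : ℝ) (G : SimpleGraph (Fin n)) [DecidableRel G.Adj] :
    Matrix (Fin n) (Fin n) ℝ :=
  α • Matrix.diagonal (fun i => (G.degree i : ℝ)) + (1 - α) • G.adjMatrix ℝ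

/-- The sum of the `k` largest eigenvalues of a real symmetric matrix, expressed as
the supremum over all `k`-subsets of indices of the corresponding eigenvalue sums. -/
noncomputable def Sk {n : ℕ} (M : Matrix (Fin n) (Fin n) ℝ) (k : ℕ) : ℝ :=
  if h : M.IsHermitian then
    sSup {x : ℝ | ∃ s : Finset (Fin n), s.card = k ∧ x = ∑ i ∈ s, h.eigenvalues i}
  else 0

/-! Write `P` for the path. For `α < 1` the quadratic form of `A_α(P)` is strictly below `2‖x‖²`,
so `S₂(A_α(P)) < 4`. If `G` is not a path, either it has a vertex of degree at least three or it is
a cycle.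

In the first case `G` contains, as `n ≥ 12`, one of ten explicit small forests, found by exploring
`G` from that vertex: either two branching vertices or a vertex of degree four turn up, or the
exploration grows a spider with three legs of total length eleven. Each of these forests has
`S₂(A_{1/2}) ≥ 4`, by Ky Fan's principle applied to two orthogonal test vectors, and `S₂(A_α)` grows
with `α` and, for `α ≥ 1/2`, with the graph.

In the second case `G` properly contains a spanning path. Rotate an optimal orthonormal pair for
the path so that its second vector is orthogonal to the all-ones vector `𝟙`. Replacing the first
vector, which contributes less than `2`, by `𝟙`, whose Rayleigh quotient in `G` is the average
degree and hence at least `2`, strictly increases the sum.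
-/

section KyFan

theorem exists_card_eq_sum_mul_le_sum {ι : Type*} [Fintype ι] {f w : ι → ℝ} {k : ℕ}
    (hw₀ : ∀ i, 0 ≤ w i) (hw₁ : ∀ i, w i ≤ 1) (hw : ∑ i, w i = k) :
    ∃ s : Finset ι, #s = k ∧ ∑ i, f i * w i ≤ ∑ i ∈ s, f i := by
  classical
  have hk : k ≤ #(univ : Finset ι) := by
    have h := sum_le_sum fun i (_ : i ∈ univ) => hw₁ i
    rw [hw, sum_const, nsmul_one] at h
    exact_mod_cast h
  obtain ⟨s, hs, hmax⟩ := exists_max_image (powersetCard k (univ : Finset ι))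
    (fun s => ∑ i ∈ s, f i) (powersetCard_nonempty.2 hk)
  rw [mem_powersetCard_univ] at hs
  refine ⟨s, hs, ?_⟩
  have exchange : ∀ i ∈ s, ∀ j ∉ s, f j ≤ f i := by
    intro i hi j hj
    have hj' : j ∉ s.erase i := fun h => hj (mem_of_mem_erase h)
    have h := hmax (insert j (s.erase i)) <| by
      rw [mem_powersetCard_univ, card_insert_of_notMem hj', card_erase_add_one hi, hs]
    rw [sum_insert hj', ← add_sum_erase s f hi] at h
    linarith
  rcases s.eq_empty_or_nonempty with rfl | hne
  · have hw' : ∀ i ∈ univ, w i = 0 := (sum_eq_zero_iff_of_nonneg fun i _ => hw₀ i).1 <| by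
      rw [hw, ← hs, card_empty, Nat.cast_zero]
    exact (sum_eq_zero fun i hi => by rw [hw' i hi, mul_zero]).le
  · obtain ⟨m, hm, hmin⟩ := exists_min_image s f hne
    have pointwise : ∀ i, f i * w i ≤ f m * w i + if i ∈ s then f i - f m else 0 := by
      intro i
      split_ifs with hi
      · nlinarith [hmin i hi, hw₁ i]
      · nlinarith [exchange m hm i hi, hw₀ i]
    calc ∑ i, f i * w i ≤ ∑ i, (f m * w i + if i ∈ s then f i - f m else 0) :=
          sum_le_sum fun i _ => pointwise i
      _ = ∑ i ∈ s, f i := by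
          rw [sum_add_distrib, ← mul_sum, hw, sum_ite_mem, univ_inter, sum_sub_distrib,
            sum_const, hs, nsmul_eq_mul]
          ring

variable {n k : ℕ} {M : Matrix (Fin n) (Fin n) ℝ}

theorem isGreatest_Sk (hM : M.IsHermitian) (hk : k ≤ n) :
    IsGreatest {x : ℝ | ∃ s : Finset (Fin n), #s = k ∧ x = ∑ i ∈ s, hM.eigenvalues i} (Sk M k) := by
  have hfin : {x : ℝ | ∃ s : Finset (Fin n), #s = k ∧ x = ∑ i ∈ s, hM.eigenvalues i}.Finite := by
    refine (Set.finite_range fun s : Finset (Fin n) => ∑ i ∈ s, hM.eigenvalues i).subset ?_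
    rintro _ ⟨s, -, rfl⟩
    exact ⟨s, rfl⟩
  rw [Sk, dif_pos hM]
  refine ⟨Set.Nonempty.csSup_mem ?_ hfin, fun _ => le_csSup hfin.bddAbove⟩
  obtain ⟨s, hs⟩ := powersetCard_nonempty.2 (hk.trans_eq (card_fin n).symm)
  exact ⟨_, s, (mem_powersetCard.1 hs).2, rfl⟩

theorem dotProduct_mulVec_self_eq_sum_eigenvalues (hM : M.IsHermitian)
    (x : EuclideanSpace ℝ (Fin n)) :
    x.ofLp ⬝ᵥ M *ᵥ x.ofLp = ∑ a, hM.eigenvalues a * inner ℝ (hM.eigenvectorBasis a) x ^ 2 := by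
  have inner_basis (a : Fin n) : inner ℝ (hM.eigenvectorBasis a) (WithLp.toLp 2 (M *ᵥ x.ofLp)) =
      hM.eigenvalues a * inner ℝ (hM.eigenvectorBasis a) x := by
    simp only [EuclideanSpace.inner_eq_star_dotProduct, star_trivial]
    rw [dotProduct_comm, dotProduct_mulVec, ← mulVec_transpose,
      ← conjTranspose_eq_transpose_of_trivial, hM.eq, hM.mulVec_eigenvectorBasis, smul_dotProduct,
      smul_eq_mul, dotProduct_comm]
  calc x.ofLp ⬝ᵥ M *ᵥ x.ofLp = inner ℝ x (WithLp.toLp 2 (M *ᵥ x.ofLp)) := by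
        rw [EuclideanSpace.inner_eq_star_dotProduct, star_trivial, dotProduct_comm]
    _ = ∑ a, hM.eigenvalues a * inner ℝ (hM.eigenvectorBasis a) x ^ 2 := by
        rw [← hM.eigenvectorBasis.sum_inner_mul_inner]
        refine sum_congr rfl fun a _ => ?_
        rw [inner_basis, real_inner_comm]
        ring

theorem sum_dotProduct_mulVec_le_Sk (hM : M.IsHermitian) {x : Fin k → EuclideanSpace ℝ (Fin n)}
    (hx : Orthonormal ℝ x) : ∑ i, (x i).ofLp ⬝ᵥ M *ᵥ (x i).ofLp ≤ Sk M k := by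
  let b := hM.eigenvectorBasis
  have hk : k ≤ n := by
    simpa using hx.linearIndependent.fintype_card_le_finrank
  obtain ⟨s, hs, hle⟩ := exists_card_eq_sum_mul_le_sum (f := hM.eigenvalues)
    (w := fun a => ∑ i, inner ℝ (b a) (x i) ^ 2) (k := k)
    (fun a => sum_nonneg fun i _ => sq_nonneg _)
    (fun a => by
      simpa [real_inner_comm] using hx.sum_inner_products_le (s := univ) (b a))
    (by
      have parseval (i : Fin k) : ∑ a, inner ℝ (b a) (x i) ^ 2 = 1 := by
        simpa [hx.norm_eq_one i] using b.sum_sq_norm_inner_right (x i)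
      rw [sum_comm, sum_congr rfl fun i _ => parseval i]
      simp)
  calc ∑ i, (x i).ofLp ⬝ᵥ M *ᵥ (x i).ofLp
      = ∑ a, hM.eigenvalues a * ∑ i, inner ℝ (b a) (x i) ^ 2 := by
        simp only [dotProduct_mulVec_self_eq_sum_eigenvalues hM, mul_sum]
        exact sum_comm
    _ ≤ ∑ a ∈ s, hM.eigenvalues a := hle
    _ ≤ Sk M k := (isGreatest_Sk hM hk).2 ⟨s, hs, rfl⟩

theorem exists_orthonormal_Sk_eq (hM : M.IsHermitian) (hk : k ≤ n) :
    ∃ x : Fin k → EuclideanSpace ℝ (Fin n), Orthonormal ℝ x ∧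
      Sk M k = ∑ i, (x i).ofLp ⬝ᵥ M *ᵥ (x i).ofLp := by
  obtain ⟨s, hs, hSk⟩ := (isGreatest_Sk hM hk).1
  let e : Fin k ↪o Fin n := s.orderEmbOfFin hs
  refine ⟨hM.eigenvectorBasis ∘ e, hM.eigenvectorBasis.orthonormal.comp e e.injective, ?_⟩
  have form_basis (a : Fin n) : (hM.eigenvectorBasis a).ofLp ⬝ᵥ M *ᵥ (hM.eigenvectorBasis a).ofLp =
      hM.eigenvalues a := by
    rw [dotProduct_mulVec_self_eq_sum_eigenvalues hM]
    simp [hM.eigenvectorBasis.inner_eq_ite]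
  simp only [Function.comp_apply, form_basis]
  rw [hSk, ← map_orderEmbOfFin_univ s hs, sum_map]
  rfl

theorem Sk_le_Sk_of_linearIsometry {m : ℕ} {N : Matrix (Fin m) (Fin m) ℝ} (hM : M.IsHermitian)
    (hN : N.IsHermitian) (hk : k ≤ n) (T : EuclideanSpace ℝ (Fin n) →ₗᵢ[ℝ] EuclideanSpace ℝ (Fin m))
    (h : ∀ x, x.ofLp ⬝ᵥ M *ᵥ x.ofLp ≤ (T x).ofLp ⬝ᵥ N *ᵥ (T x).ofLp) : Sk M k ≤ Sk N k := by
  obtain ⟨x, hx, hSk⟩ := exists_orthonormal_Sk_eq hM hk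
  calc Sk M k = ∑ i, (x i).ofLp ⬝ᵥ M *ᵥ (x i).ofLp := hSk
    _ ≤ ∑ i, (T (x i)).ofLp ⬝ᵥ N *ᵥ (T (x i)).ofLp := sum_le_sum fun i _ => h (x i)
    _ ≤ Sk N k := sum_dotProduct_mulVec_le_Sk hN (hx.comp_linearIsometry T)

theorem sum_rayleigh_le_Sk (hM : M.IsHermitian) {x : Fin k → Fin n → ℝ} (hx₀ : ∀ i, x i ≠ 0)
    (hx : Pairwise fun i j => x i ⬝ᵥ x j = 0) :
    ∑ i, (x i ⬝ᵥ M *ᵥ x i) / (x i ⬝ᵥ x i) ≤ Sk M k := by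
  let c (i : Fin k) : ℝ := (√(x i ⬝ᵥ x i))⁻¹
  have c_mul_self (i : Fin k) : c i * c i * (x i ⬝ᵥ x i) = 1 := by
    have hpos : x i ⬝ᵥ x i ≠ 0 := dotProduct_self_eq_zero.not.2 (hx₀ i)
    have hnonneg : 0 ≤ x i ⬝ᵥ x i := sum_nonneg fun _ _ => mul_self_nonneg _
    rw [← mul_inv, Real.mul_self_sqrt hnonneg, inv_mul_cancel₀ hpos]
  have hortho : Orthonormal ℝ fun i => WithLp.toLp 2 (c i • x i) := by
    rw [orthonormal_iff_ite]
    intro i j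
    rw [EuclideanSpace.inner_toLp_toLp, star_trivial, smul_dotProduct, dotProduct_smul,
      smul_eq_mul, smul_eq_mul, ← mul_assoc]
    split_ifs with hij
    · rw [hij, c_mul_self]
    · rw [hx (Ne.symm hij), mul_zero]
  refine (sum_congr rfl fun i _ => ?_).trans_le (sum_dotProduct_mulVec_le_Sk hM hortho)
  rw [mulVec_smul, smul_dotProduct, dotProduct_smul, smul_eq_mul, smul_eq_mul, ← mul_assoc,
    div_eq_iff (dotProduct_self_eq_zero.not.2 (hx₀ i)), mul_right_comm, c_mul_self, one_mul]

theorem exists_orthonormal_inner_eq_zero_Sk_two_eq (hM : M.IsHermitian) (hn : 2 ≤ n)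
    (z : EuclideanSpace ℝ (Fin n)) :
    ∃ x : Fin 2 → EuclideanSpace ℝ (Fin n), Orthonormal ℝ x ∧ inner ℝ (x 1) z = 0 ∧
      Sk M 2 = ∑ i, (x i).ofLp ⬝ᵥ M *ᵥ (x i).ofLp := by
  obtain ⟨x, hx, hSk⟩ := exists_orthonormal_Sk_eq hM hn
  let ζ : ℂ := ⟨inner ℝ (x 0) z, inner ℝ (x 1) z⟩
  let c := Real.cos ζ.arg
  let s := Real.sin ζ.arg
  have hcs : c ^ 2 + s ^ 2 = 1 := Real.cos_sq_add_sin_sq _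
  have h01 : inner ℝ (x 0) (x 1) = 0 := hx.inner_eq_zero (by decide)
  refine ⟨![c • x 0 + s • x 1, c • x 1 - s • x 0], ?_, ?_, ?_⟩
  · have h10 : inner ℝ (x 1) (x 0) = 0 := by rw [real_inner_comm, h01]
    rw [orthonormal_iff_ite]
    simp only [Fin.forall_fin_two, Matrix.cons_val_zero, Matrix.cons_val_one, inner_add_left,
      inner_add_right, inner_sub_left, inner_sub_right, real_inner_smul_left,
      real_inner_smul_right, real_inner_self_eq_norm_sq, hx.norm_eq_one, h01, h10]
    grind
  · have hre : ‖ζ‖ * c = inner ℝ (x 0) z := Complex.norm_mul_cos_arg ζ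
    have him : ‖ζ‖ * s = inner ℝ (x 1) z := Complex.norm_mul_sin_arg ζ
    simp only [Matrix.cons_val_one, Matrix.cons_val_zero, inner_sub_left, real_inner_smul_left,
      ← hre, ← him]
    ring
  · simp only [hSk, Fin.sum_univ_two, Matrix.cons_val_zero, Matrix.cons_val_one, WithLp.ofLp_add,
      WithLp.ofLp_sub, WithLp.ofLp_smul, mulVec_add, mulVec_sub, mulVec_smul, add_dotProduct,
      sub_dotProduct, dotProduct_add, dotProduct_sub, smul_dotProduct, dotProduct_smul, smul_eq_mul]
    linear_combination -((x 0).ofLp ⬝ᵥ M *ᵥ (x 0).ofLp + (x 1).ofLp ⬝ᵥ M *ᵥ (x 1).ofLp) * hcs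

end KyFan

theorem dotProduct_self_of_orthonormal {ι κ : Type*} [Fintype κ] {x : ι → EuclideanSpace ℝ κ}
    (hx : Orthonormal ℝ x) (i : ι) : (x i).ofLp ⬝ᵥ (x i).ofLp = 1 := by
  simpa [hx.norm_eq_one] using (EuclideanSpace.inner_eq_star_dotProduct (x i) (x i)).symm

theorem rayleigh_add_rayleigh_le_Sk_two {n : ℕ} {M : Matrix (Fin n) (Fin n) ℝ}
    (hM : M.IsHermitian) {x y : Fin n → ℝ} (hx : x ≠ 0) (hy : y ≠ 0) (hxy : x ⬝ᵥ y = 0) :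
    (x ⬝ᵥ M *ᵥ x) / (x ⬝ᵥ x) + (y ⬝ᵥ M *ᵥ y) / (y ⬝ᵥ y) ≤ Sk M 2 := by
  have hortho : Pairwise fun i j : Fin 2 => ![x, y] i ⬝ᵥ ![x, y] j = 0 := by
    simp [Pairwise, Fin.forall_fin_two, hxy, dotProduct_comm y x]
  have hne : ∀ i : Fin 2, ![x, y] i ≠ 0 := by simp [Fin.forall_fin_two, hx, hy]
  simpa using sum_rayleigh_le_Sk hM hne hortho

section QuadraticForm

variable {n k : ℕ} {α β : ℝ} (G : SimpleGraph (Fin n)) [DecidableRel G.Adj]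

theorem isHermitian_Aalpha : (Aalpha α G).IsHermitian := by
  refine IsHermitian.add ?_ ?_
  · exact (isHermitian_diagonal _).smul (IsSelfAdjoint.all α)
  · exact (G.isHermitian_adjMatrix ℝ).smul (IsSelfAdjoint.all (1 - α))

theorem dotProduct_Aalpha_mulVec_self_eq_sub_lapMatrix (x : Fin n → ℝ) :
    x ⬝ᵥ Aalpha α G *ᵥ x =
      ∑ u, G.degree u * x u ^ 2 - (1 - α) * (x ⬝ᵥ G.lapMatrix ℝ *ᵥ x) := by
  have h : Aalpha α G = G.degMatrix ℝ - (1 - α) • G.lapMatrix ℝ := by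
    rw [Aalpha, SimpleGraph.lapMatrix, SimpleGraph.degMatrix]
    module
  rw [h, sub_mulVec, smul_mulVec, dotProduct_sub, dotProduct_smul,
    SimpleGraph.dotProduct_mulVec_degMatrix, smul_eq_mul]
  simp only [sq, mul_assoc]

theorem two_mul_dotProduct_Aalpha_mulVec_self (x : Fin n → ℝ) :
    2 * (x ⬝ᵥ Aalpha α G *ᵥ x) = ∑ u, ∑ v, if G.Adj u v then
      (2 * α - 1) * (x u ^ 2 + x v ^ 2) + (1 - α) * (x u + x v) ^ 2 else 0 := by
  have sum_degree : ∑ u, G.degree u * x u ^ 2 =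
      ∑ u, ∑ v, if G.Adj u v then x u ^ 2 else 0 := by
    simp only [SimpleGraph.degree_eq_sum_if_adj, sum_mul, ite_mul, one_mul, zero_mul]
  have sum_degree' : ∑ u, G.degree u * x u ^ 2 =
      ∑ u, ∑ v, if G.Adj u v then x v ^ 2 else 0 := by
    rw [sum_degree, sum_comm]
    simp only [SimpleGraph.adj_comm]
  calc 2 * (x ⬝ᵥ Aalpha α G *ᵥ x)
      = ∑ u, G.degree u * x u ^ 2 + ∑ u, G.degree u * x u ^ 2 -
          (1 - α) * ∑ u, ∑ v, if G.Adj u v then (x u - x v) ^ 2 else 0 := by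
        rw [dotProduct_Aalpha_mulVec_self_eq_sub_lapMatrix, ← toLinearMap₂'_apply',
          SimpleGraph.lapMatrix_toLinearMap₂']
        ring
    _ = _ := by
        nth_rw 1 [sum_degree, sum_degree']
        simp only [mul_sum, ← sum_add_distrib, ← sum_sub_distrib]
        refine sum_congr rfl fun u _ => sum_congr rfl fun v _ => ?_
        split_ifs <;> ring

theorem Sk_Aalpha_mono_alpha (hαβ : α ≤ β) (hk : k ≤ n) :
    Sk (Aalpha α G) k ≤ Sk (Aalpha β G) k := by
  refine Sk_le_Sk_of_linearIsometry (isHermitian_Aalpha G) (isHermitian_Aalpha G) hk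
    LinearIsometry.id fun x => ?_
  have hL : 0 ≤ x.ofLp ⬝ᵥ G.lapMatrix ℝ *ᵥ x.ofLp :=
    (G.posSemidef_lapMatrix ℝ).dotProduct_mulVec_nonneg x.ofLp
  rw [LinearIsometry.id_apply, dotProduct_Aalpha_mulVec_self_eq_sub_lapMatrix,
    dotProduct_Aalpha_mulVec_self_eq_sub_lapMatrix]
  gcongr

theorem one_dotProduct_Aalpha_mulVec_one :
    (1 : Fin n → ℝ) ⬝ᵥ Aalpha α G *ᵥ 1 = 2 * #G.edgeFinset := by
  have hL : G.lapMatrix ℝ *ᵥ 1 = 0 := G.lapMatrix_mulVec_const_eq_zero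
  rw [dotProduct_Aalpha_mulVec_self_eq_sub_lapMatrix, hL, dotProduct_zero, mul_zero, sub_zero]
  simp only [Pi.one_apply, one_pow, mul_one]
  exact_mod_cast G.sum_degrees_eq_twice_card_edges

variable {G}

theorem dotProduct_Aalpha_mulVec_self_lt (hG : G.Connected) (hα : α < 1) {d : ℕ}
    (hdeg : ∀ v, G.degree v ≤ d) {w : Fin n} (hw : G.degree w < d) {x : Fin n → ℝ} (hx : x ≠ 0) :
    x ⬝ᵥ Aalpha α G *ᵥ x < d * (x ⬝ᵥ x) := by
  have sum_degree_le : ∑ u, G.degree u * x u ^ 2 ≤ d * (x ⬝ᵥ x) := by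
    simp only [dotProduct, mul_sum, ← sq]
    gcongr with u
    exact hdeg u
  have hL : 0 ≤ x ⬝ᵥ G.lapMatrix ℝ *ᵥ x :=
    (G.posSemidef_lapMatrix ℝ).dotProduct_mulVec_nonneg x
  rw [dotProduct_Aalpha_mulVec_self_eq_sub_lapMatrix]
  rcases hL.lt_or_eq with hL | hL
  · nlinarith
  · have hconst (u v : Fin n) : x u = x v :=
      (G.lapMatrix_toLinearMap₂'_apply'_eq_zero_iff_forall_reachable x).1
        (by rw [toLinearMap₂'_apply', ← hL]) u v (hG.preconnected u v)
    have hxw : x w ≠ 0 := fun h => hx <| funext fun u => by rw [hconst u w, h, Pi.zero_apply]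
    rw [← hL, mul_zero, sub_zero, dotProduct, mul_sum]
    refine sum_lt_sum (fun u _ => ?_) ⟨w, mem_univ w, ?_⟩
    · rw [← sq]; gcongr; exact hdeg u
    · rw [← sq]; gcongr

theorem Sk_Aalpha_two_lt (hn : 2 ≤ n) (hG : G.Connected) (hα : α < 1) {d : ℕ}
    (hdeg : ∀ v, G.degree v ≤ d) {w : Fin n} (hw : G.degree w < d) :
    Sk (Aalpha α G) 2 < 2 * d := by
  obtain ⟨x, hx, hSk⟩ := exists_orthonormal_Sk_eq (isHermitian_Aalpha (α := α) G) hn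
  have form_lt (i : Fin 2) : (x i).ofLp ⬝ᵥ Aalpha α G *ᵥ (x i).ofLp < d := by
    simpa [dotProduct_self_of_orthonormal hx] using dotProduct_Aalpha_mulVec_self_lt hG hα hdeg hw
      (x := (x i).ofLp) (by simpa using hx.ne_zero i)
  rw [hSk, Fin.sum_univ_two]
  linarith [form_lt 0, form_lt 1]

end QuadraticForm

section Containment

theorem sum_comp_le_sum_of_nonneg {ι κ : Type*} [Fintype ι] [Fintype κ] (f : ι ↪ κ) {g : κ → ℝ}
    (hg : ∀ j, 0 ≤ g j) : ∑ i, g (f i) ≤ ∑ j, g j := by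
  rw [← sum_map univ f g]
  exact sum_le_univ_sum_of_nonneg hg

variable {m n : ℕ}

/-- Extension by zero along an injection, as a linear isometry of Euclidean spaces. -/
noncomputable def extendByZero (f : Fin m ↪ Fin n) :
    EuclideanSpace ℝ (Fin m) →ₗᵢ[ℝ] EuclideanSpace ℝ (Fin n) where
  toLinearMap := (WithLp.linearEquiv 2 ℝ (Fin n → ℝ)).symm.toLinearMap ∘ₗ
    Function.ExtendByZero.linearMap ℝ f ∘ₗ (WithLp.linearEquiv 2 ℝ (Fin m → ℝ)).toLinearMap
  norm_map' x := by
    have hrange : ∀ u, u ∉ Set.range f → ‖Function.extend f x.ofLp 0 u‖ ^ 2 = 0 := by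
      intro u hu
      rw [Function.extend_apply' _ _ _ hu, Pi.zero_apply, norm_zero, sq, zero_mul]
    rw [EuclideanSpace.norm_eq, EuclideanSpace.norm_eq,
      Fintype.sum_of_injective f f.injective (fun i => ‖x i‖ ^ 2) _ hrange fun i => ?_]
    · rfl
    · rw [f.injective.extend_apply]

variable {k : ℕ} {α : ℝ} {H : SimpleGraph (Fin m)} {G : SimpleGraph (Fin n)}
  [DecidableRel H.Adj] [DecidableRel G.Adj]

theorem comp_dotProduct_Aalpha_mulVec_comp_le (φ : H.Copy G) (hα₀ : 1 / 2 ≤ α) (hα₁ : α ≤ 1)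
    (z : Fin n → ℝ) : (z ∘ φ) ⬝ᵥ Aalpha α H *ᵥ (z ∘ φ) ≤ z ⬝ᵥ Aalpha α G *ᵥ z := by
  let e (u v : Fin n) : ℝ := (2 * α - 1) * (z u ^ 2 + z v ^ 2) + (1 - α) * (z u + z v) ^ 2
  have he (u v : Fin n) : 0 ≤ e u v :=
    add_nonneg (mul_nonneg (by linarith) (by positivity))
      (mul_nonneg (by linarith) (by positivity))
  have he_ite (u v : Fin n) : 0 ≤ if G.Adj u v then e u v else 0 := by
    split_ifs
    exacts [he _ _, le_rfl]
  suffices 2 * ((z ∘ φ) ⬝ᵥ Aalpha α H *ᵥ (z ∘ φ)) ≤ 2 * (z ⬝ᵥ Aalpha α G *ᵥ z) by linarith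
  rw [two_mul_dotProduct_Aalpha_mulVec_self, two_mul_dotProduct_Aalpha_mulVec_self]
  calc ∑ i, ∑ j, (if H.Adj i j then e (φ i) (φ j) else 0)
      ≤ ∑ i, ∑ j, if G.Adj (φ i) (φ j) then e (φ i) (φ j) else 0 := by
        gcongr with i _ j
        split_ifs with h h'
        exacts [le_rfl, absurd (φ.toHom.map_adj h) h', he _ _, le_rfl]
    _ ≤ ∑ i, ∑ v, if G.Adj (φ i) v then e (φ i) v else 0 :=
        sum_le_sum fun i _ => sum_comp_le_sum_of_nonneg φ.toEmbedding
          (g := fun v => if G.Adj (φ i) v then e (φ i) v else 0) (he_ite _)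
    _ ≤ ∑ u, ∑ v, if G.Adj u v then e u v else 0 :=
        sum_comp_le_sum_of_nonneg φ.toEmbedding
          (g := fun u => ∑ v, if G.Adj u v then e u v else 0)
          fun u => sum_nonneg fun v _ => he_ite u v

theorem Sk_Aalpha_le_of_isContained (hHG : H.IsContained G) (hα₀ : 1 / 2 ≤ α) (hα₁ : α ≤ 1)
    (hk : k ≤ m) : Sk (Aalpha α H) k ≤ Sk (Aalpha α G) k := by
  obtain ⟨φ⟩ := hHG
  refine Sk_le_Sk_of_linearIsometry (isHermitian_Aalpha H) (isHermitian_Aalpha G) hk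
    (extendByZero φ.toEmbedding) fun x => ?_
  have hx : (extendByZero φ.toEmbedding x).ofLp ∘ φ = x.ofLp := by
    funext i
    exact φ.injective.extend_apply _ _ i
  calc x.ofLp ⬝ᵥ Aalpha α H *ᵥ x.ofLp = _ := by rw [← hx]
    _ ≤ _ := comp_dotProduct_Aalpha_mulVec_comp_le φ hα₀ hα₁ _

theorem Sk_Aalpha_eq_of_iso (e : H ≃g G) (hα₀ : 1 / 2 ≤ α) (hα₁ : α ≤ 1) (hk : k ≤ m) :
    Sk (Aalpha α H) k = Sk (Aalpha α G) k := by
  have hmn : m = n := by simpa using Fintype.card_congr e.toEquiv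
  exact le_antisymm (Sk_Aalpha_le_of_isContained ⟨e.toCopy⟩ hα₀ hα₁ hk)
    (Sk_Aalpha_le_of_isContained ⟨e.symm.toCopy⟩ hα₀ hα₁ (hk.trans_eq hmn))

theorem card_le_card_edgeFinset_of_connected_of_lt {V : Type*} [Fintype V] {H G : SimpleGraph V}
    [Fintype G.edgeSet] (hH : H.Connected) (hHG : H < G) :
    Fintype.card V ≤ #G.edgeFinset := by
  classical
  have hlt := card_lt_card (SimpleGraph.edgeFinset_ssubset_edgeFinset.2 hHG)
  have htree := hH.card_vert_le_card_edgeSet_add_one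
  rw [Nat.card_eq_fintype_card, Nat.card_eq_fintype_card, ← SimpleGraph.edgeFinset_card] at htree
  lia

theorem Sk_Aalpha_two_lt_of_lt {H : SimpleGraph (Fin n)} [DecidableRel H.Adj] (hn : 2 ≤ n)
    (hH : H.Connected) (hHG : H < G) (hα₀ : 1 / 2 ≤ α) (hα₁ : α < 1)
    (hdeg : ∀ v, H.degree v ≤ 2) {w : Fin n} (hw : H.degree w < 2) :
    Sk (Aalpha α H) 2 < Sk (Aalpha α G) 2 := by
  let one : EuclideanSpace ℝ (Fin n) := WithLp.toLp 2 1
  obtain ⟨x, hx, hortho, hSk⟩ :=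
    exists_orthonormal_inner_eq_zero_Sk_two_eq (isHermitian_Aalpha (α := α) H) hn one
  have hself (i : Fin 2) : (x i).ofLp ⬝ᵥ (x i).ofLp = 1 := dotProduct_self_of_orthonormal hx i
  have hne (i : Fin 2) : (x i).ofLp ≠ 0 := fun h => by simpa [h] using hself i
  have form_zero : (x 0).ofLp ⬝ᵥ Aalpha α H *ᵥ (x 0).ofLp < 2 := by
    simpa [hself] using dotProduct_Aalpha_mulVec_self_lt hH hα₁ hdeg hw (hne 0)
  have form_one : (x 1).ofLp ⬝ᵥ Aalpha α H *ᵥ (x 1).ofLp ≤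
      (x 1).ofLp ⬝ᵥ Aalpha α G *ᵥ (x 1).ofLp :=
    comp_dotProduct_Aalpha_mulVec_comp_le (SimpleGraph.Copy.ofLE H G hHG.le) hα₀ hα₁.le _
  have hn₀ : (0 : ℝ) < n := by positivity
  have rayleigh_one : 2 ≤ (1 ⬝ᵥ Aalpha α G *ᵥ 1) / ((1 : Fin n → ℝ) ⬝ᵥ 1) := by
    have hcard : (n : ℝ) ≤ #G.edgeFinset := by
      simpa using card_le_card_edgeFinset_of_connected_of_lt hH hHG
    rw [one_dotProduct_Aalpha_mulVec_one, one_dotProduct_one, Fintype.card_fin, le_div_iff₀ hn₀]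
    linarith
  have hsum : (1 ⬝ᵥ Aalpha α G *ᵥ 1) / ((1 : Fin n → ℝ) ⬝ᵥ 1) +
      (x 1).ofLp ⬝ᵥ Aalpha α G *ᵥ (x 1).ofLp ≤ Sk (Aalpha α G) 2 := by
    have : Nonempty (Fin n) := ⟨⟨0, by lia⟩⟩
    have hsum := rayleigh_add_rayleigh_le_Sk_two (isHermitian_Aalpha (α := α) G) one_ne_zero
      (hne 1) (by simpa [EuclideanSpace.inner_eq_star_dotProduct] using hortho)
    rwa [hself, div_one] at hsum
  rw [hSk, Fin.sum_univ_two]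
  linarith

end Containment

section Heavy

variable {m n : ℕ} {α : ℝ}

/-- The graph on `Fin m` with a prescribed list of edges, used to write down small forests. -/
def graphOfEdges (E : List (Fin m × Fin m)) : SimpleGraph (Fin m) :=
  SimpleGraph.fromRel fun i j => (i, j) ∈ E

instance (E : List (Fin m × Fin m)) : DecidableRel (graphOfEdges E).Adj :=
  inferInstanceAs (DecidableRel (SimpleGraph.fromRel fun i j => (i, j) ∈ E).Adj)

theorem isContained_of_forall_mem_edges {V : Type*} {G : SimpleGraph V}
    {E : List (Fin m × Fin m)} {f : Fin m → V} (hf : Function.Injective f)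
    (hE : ∀ e ∈ E, G.Adj (f e.1) (f e.2)) : (graphOfEdges E).IsContained G := by
  refine ⟨⟨⟨f, ?_⟩, hf⟩⟩
  rintro i j ⟨-, h | h⟩
  exacts [hE _ h, (hE _ h).symm]

/-- Four times the quadratic form of `A_{1/2}`, evaluated at an integer vector; this is the form
of the signless Laplacian with every edge counted in both directions. -/
def signlessForm (H : SimpleGraph (Fin m)) [DecidableRel H.Adj] (x : Fin m → ℤ) : ℤ :=
  ∑ i, ∑ j, if H.Adj i j then (x i + x j) ^ 2 else 0

theorem signlessForm_eq (H : SimpleGraph (Fin m)) [DecidableRel H.Adj] (x : Fin m → ℤ) :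
    (signlessForm H x : ℝ) =
      4 * ((fun i => (x i : ℝ)) ⬝ᵥ Aalpha (1 / 2) H *ᵥ fun i => (x i : ℝ)) := by
  have h := two_mul_dotProduct_Aalpha_mulVec_self (α := 1 / 2) H fun i => (x i : ℝ)
  rw [show (4 : ℝ) = 2 * 2 by norm_num, mul_assoc, h, signlessForm]
  simp only [Int.cast_sum, mul_sum]
  refine sum_congr rfl fun i _ => sum_congr rfl fun j _ => ?_
  split_ifs <;> push_cast <;> ring

/-- A pair of orthogonal integer vectors whose Rayleigh quotients for `A_{1/2}(H)` add up to at
least `4`, with all denominators cleared. -/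
structure IsHeavyCertificate (H : SimpleGraph (Fin m)) [DecidableRel H.Adj]
    (x y : Fin m → ℤ) : Prop where
  left_ne_zero : x ≠ 0
  right_ne_zero : y ≠ 0
  orthogonal : x ⬝ᵥ y = 0
  le_form : 16 * (x ⬝ᵥ x) * (y ⬝ᵥ y) ≤ signlessForm H x * (y ⬝ᵥ y) + signlessForm H y * (x ⬝ᵥ x)

instance (H : SimpleGraph (Fin m)) [DecidableRel H.Adj] (x y : Fin m → ℤ) :
    Decidable (IsHeavyCertificate H x y) :=
  decidable_of_iff (x ≠ 0 ∧ y ≠ 0 ∧ x ⬝ᵥ y = 0 ∧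
      16 * (x ⬝ᵥ x) * (y ⬝ᵥ y) ≤ signlessForm H x * (y ⬝ᵥ y) + signlessForm H y * (x ⬝ᵥ x))
    ⟨fun ⟨hx, hy, hxy, h⟩ => ⟨hx, hy, hxy, h⟩, fun ⟨hx, hy, hxy, h⟩ => ⟨hx, hy, hxy, h⟩⟩

theorem IsHeavyCertificate.four_le_Sk {H : SimpleGraph (Fin m)} [DecidableRel H.Adj]
    {x y : Fin m → ℤ} (h : IsHeavyCertificate H x y) : 4 ≤ Sk (Aalpha (1 / 2) H) 2 := by
  let x' (i : Fin m) : ℝ := x i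
  let y' (i : Fin m) : ℝ := y i
  have cast_dotProduct (u v : Fin m → ℤ) :
      (fun i => (u i : ℝ)) ⬝ᵥ (fun i => (v i : ℝ)) = (u ⬝ᵥ v : ℤ) := by
    simp [dotProduct]
  have hx : x' ≠ 0 := fun h₀ => h.left_ne_zero <| funext fun i =>
    Int.cast_eq_zero.1 (congrFun h₀ i)
  have hy : y' ≠ 0 := fun h₀ => h.right_ne_zero <| funext fun i =>
    Int.cast_eq_zero.1 (congrFun h₀ i)
  have hxy : x' ⬝ᵥ y' = 0 := by rw [cast_dotProduct, h.orthogonal, Int.cast_zero]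
  have hx₀ : 0 < x' ⬝ᵥ x' := by simpa using dotProduct_star_self_pos_iff.2 hx
  have hy₀ : 0 < y' ⬝ᵥ y' := by simpa using dotProduct_star_self_pos_iff.2 hy
  have hform := Int.cast_le (R := ℝ).2 h.le_form
  push_cast [signlessForm_eq] at hform
  rw [← cast_dotProduct, ← cast_dotProduct] at hform
  calc (4 : ℝ) ≤ (x' ⬝ᵥ Aalpha (1 / 2) H *ᵥ x') / (x' ⬝ᵥ x') +
        (y' ⬝ᵥ Aalpha (1 / 2) H *ᵥ y') / (y' ⬝ᵥ y') := by
        rw [div_add_div _ _ hx₀.ne' hy₀.ne', le_div_iff₀ (mul_pos hx₀ hy₀)]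
        linarith
    _ ≤ Sk (Aalpha (1 / 2) H) 2 := rayleigh_add_rayleigh_le_Sk_two (isHermitian_Aalpha H) hx hy hxy

/-- A graph is heavy if it contains a graph `H` with `S₂(A_{1/2}(H)) ≥ 4`. Since `S₂(A_α)` grows
with `α ≥ 1/2` and with the graph, this certifies `S₂(A_α(G)) ≥ 4` for all `α ∈ [1/2, 1]`. -/
def Heavy {V : Type*} (G : SimpleGraph V) : Prop :=
  ∃ (m : ℕ) (H : SimpleGraph (Fin m)) (_ : DecidableRel H.Adj),
    2 ≤ m ∧ 4 ≤ Sk (Aalpha (1 / 2) H) 2 ∧ H.IsContained G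

theorem Heavy.four_le_Sk {G : SimpleGraph (Fin n)} [DecidableRel G.Adj] (hG : Heavy G)
    (hα₀ : 1 / 2 ≤ α) (hα₁ : α ≤ 1) : 4 ≤ Sk (Aalpha α G) 2 := by
  obtain ⟨m, H, _, hm, h4, hHG⟩ := hG
  exact (h4.trans (Sk_Aalpha_mono_alpha H hα₀ hm)).trans
    (Sk_Aalpha_le_of_isContained hHG hα₀ hα₁ hm)

variable {V : Type*} {G : SimpleGraph V}

theorem heavy_of_isHeavyCertificate {E : List (Fin m × Fin m)} {f : Fin m → V} (hm : 2 ≤ m)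
    (hf : (List.ofFn f).Nodup) (hE : ∀ e ∈ E, G.Adj (f e.1) (f e.2)) (x y : Fin m → ℤ)
    (h : IsHeavyCertificate (graphOfEdges E) x y) : Heavy G :=
  ⟨m, graphOfEdges E, inferInstance, hm, h.four_le_Sk,
    isContained_of_forall_mem_edges (List.nodup_ofFn.1 hf) hE⟩

-- The test vectors below are rounded eigenvectors for the two largest eigenvalues of the signless
-- Laplacian of the forest.

theorem heavy_of_six_adj {v a b c d e f : V} (hnd : [v, a, b, c, d, e, f].Nodup)
    (h : ∀ w ∈ [a, b, c, d, e, f], G.Adj v w) : Heavy G :=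
  heavy_of_isHeavyCertificate (f := ![v, a, b, c, d, e, f])
    (E := [(0, 1), (0, 2), (0, 3), (0, 4), (0, 5), (0, 6)]) (by decide) hnd (by simpa using h)
    ![6, 1, 1, 1, 1, 1, 1] ![0, 0, 0, 0, 0, 1, -1] (by decide +kernel)

theorem heavy_of_four_adj_of_fork {v d a b c y w : V} (hnd : [v, d, a, b, c, y, w].Nodup)
    (hv : ∀ u ∈ [d, a, b, c], G.Adj v u) (hd : ∀ u ∈ [y, w], G.Adj d u) : Heavy G :=
  heavy_of_isHeavyCertificate (f := ![v, d, a, b, c, y, w])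
    (E := [(0, 1), (0, 2), (0, 3), (0, 4), (1, 5), (1, 6)]) (by decide) hnd
    (by simp only [List.forall_mem_cons] at hv hd ⊢; simp [hv, hd])
    ![3, 2, 1, 1, 1, 0, 0] ![-23, 54, -13, -13, -13, 16, 16] (by decide +kernel)

theorem heavy_of_four_adj_of_path {v d a b c y w : V} (hnd : [v, d, a, b, c, y, w].Nodup)
    (hv : ∀ u ∈ [d, a, b, c], G.Adj v u) (hdy : G.Adj d y) (hyw : G.Adj y w) : Heavy G :=
  heavy_of_isHeavyCertificate (f := ![v, d, a, b, c, y, w])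
    (E := [(0, 1), (0, 2), (0, 3), (0, 4), (1, 5), (5, 6)]) (by decide) hnd
    (by simp only [List.forall_mem_cons] at hv ⊢; simp [hv, hdy, hyw])
    ![3, 1, 1, 1, 1, 0, 0] ![-10, 27, 1, 1, 1, 39, 13] (by decide +kernel)

theorem heavy_of_two_claws {u v a b c d e f : V} (hnd : [u, a, b, c, v, d, e, f].Nodup)
    (hu : ∀ w ∈ [a, b, c], G.Adj u w) (hv : ∀ w ∈ [d, e, f], G.Adj v w) : Heavy G :=
  heavy_of_isHeavyCertificate (f := ![u, a, b, c, v, d, e, f])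
    (E := [(0, 1), (0, 2), (0, 3), (4, 5), (4, 6), (4, 7)]) (by decide) hnd
    (by simp only [List.forall_mem_cons] at hu hv ⊢; simp [hu, hv])
    ![3, 1, 1, 1, 0, 0, 0, 0] ![0, 0, 0, 0, 3, 1, 1, 1] (by decide +kernel)

theorem heavy_of_two_claws_of_common_leaf {u v p a b c d : V} (hnd : [u, p, v, a, b, c, d].Nodup)
    (hu : ∀ w ∈ [p, a, b], G.Adj u w) (hv : ∀ w ∈ [p, c, d], G.Adj v w) : Heavy G :=
  heavy_of_isHeavyCertificate (f := ![u, p, v, a, b, c, d])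
    (E := [(0, 1), (0, 3), (0, 4), (2, 1), (2, 5), (2, 6)]) (by decide) hnd
    (by simp only [List.forall_mem_cons] at hu hv ⊢; simp [hu, hv])
    ![3, 2, 3, 1, 1, 1, 1] ![-2, 0, 2, -1, -1, 1, 1] (by decide +kernel)

theorem heavy_of_two_adj_claws_of_path {u v a b c d y w : V}
    (hnd : [u, v, a, b, c, d, y, w].Nodup) (hu : ∀ x ∈ [v, a, b], G.Adj u x)
    (hv : ∀ x ∈ [c, d], G.Adj v x) (hay : G.Adj a y) (hyw : G.Adj y w) : Heavy G :=
  heavy_of_isHeavyCertificate (f := ![u, v, a, b, c, d, y, w])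
    (E := [(0, 1), (0, 2), (0, 3), (1, 4), (1, 5), (2, 6), (6, 7)]) (by decide) hnd
    (by simp only [List.forall_mem_cons] at hu hv ⊢; simp [hu, hv, hay, hyw])
    ![4, 4, 2, 1, 1, 1, 1, 0] ![1, -2, 2, 0, -1, -1, 2, 1] (by decide +kernel)

theorem heavy_of_two_adj_claws_of_fork_or_path {u v a b c d y w : V}
    (hnd : [u, v, a, b, c, d, y, w].Nodup) (hu : ∀ x ∈ [v, a, b], G.Adj u x)
    (hv : ∀ x ∈ [u, c, d], G.Adj v x) (h : G.Adj a y ∧ G.Adj a w ∨ G.Adj a y ∧ G.Adj y w) :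
    Heavy G := by
  rcases h with ⟨hay, haw⟩ | ⟨hay, hyw⟩
  · have hnd' : [v, u, a, c, d, y, w].Nodup := by grind
    have hau : G.Adj a u := (hu a (by simp)).symm
    exact heavy_of_two_claws_of_common_leaf hnd' hv (by simp [hau, hay, haw])
  · exact heavy_of_two_adj_claws_of_path hnd hu (List.forall_mem_of_forall_mem_cons hv) hay hyw

end Heavy

section Spider

variable {V : Type*} {G : SimpleGraph V} {v : V} {L L' : List (List V)} {l₁ l₂ l₃ : List V}

/-- `L` lists the legs of a spider in `G` centred at `v`: disjoint nonempty paths, each written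
from the neighbour of `v` outwards. The spider need not be induced. -/
structure IsSpider (G : SimpleGraph V) (v : V) (L : List (List V)) : Prop where
  nodup : (v :: L.flatten).Nodup
  isChain : ∀ l ∈ L, (v :: l).IsChain G.Adj
  ne_nil : ∀ l ∈ L, l ≠ []

theorem IsSpider.perm (h : IsSpider G v L) (hL : L.Perm L') : IsSpider G v L' where
  nodup := (hL.flatten.cons v).nodup_iff.1 h.nodup
  isChain l hl := h.isChain l (hL.mem_iff.2 hl)
  ne_nil l hl := h.ne_nil l (hL.mem_iff.2 hl)

theorem IsSpider.take (h : IsSpider G v [l₁, l₂, l₃]) {a b c : ℕ} (ha : a ≠ 0) (hb : b ≠ 0)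
    (hc : c ≠ 0) : IsSpider G v [l₁.take a, l₂.take b, l₃.take c] where
  nodup := by
    refine h.nodup.sublist ?_
    simp only [List.flatten_cons]
    exact (((List.take_sublist _ _).append
      ((List.take_sublist _ _).append ((List.take_sublist _ _).append .slnil))).cons_cons v)
  isChain := by
    simp only [List.forall_mem_cons, List.not_mem_nil, IsEmpty.forall_iff, implies_true, and_true]
    exact ⟨(h.isChain l₁ (by simp)).take (a + 1), (h.isChain l₂ (by simp)).take (b + 1),
      (h.isChain l₃ (by simp)).take (c + 1)⟩
  ne_nil := by
    have hne := h.ne_nil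
    simp only [List.forall_mem_cons] at hne ⊢
    simp [hne, ha, hb, hc]

theorem IsSpider.heavy_seven_one_one (h : IsSpider G v [l₁, l₂, l₃]) (h₁ : l₁.length = 7)
    (h₂ : l₂.length = 1) (h₃ : l₃.length = 1) : Heavy G := by
  match l₁, h₁, l₂, h₂, l₃, h₃ with
  | [a₁, a₂, a₃, a₄, a₅, a₆, a₇], _, [b₁], _, [c₁], _ =>
    have hadj := h.isChain
    simp only [List.forall_mem_cons, List.isChain_cons_cons] at hadj
    exact heavy_of_isHeavyCertificate
      (f := ![v, a₁, a₂, a₃, a₄, a₅, a₆, a₇, b₁, c₁])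
      (E := [(0, 1), (1, 2), (2, 3), (3, 4), (4, 5), (5, 6), (6, 7), (0, 8), (0, 9)])
      (by decide) h.nodup (by simp [hadj])
      ![26, 16, 10, 6, 4, 2, 1, 0, 8, 8]
      ![-6, 0, 5, 10, 12, 11, 8, 3, -2, -2] (by decide +kernel)

theorem IsSpider.heavy_five_four_one (h : IsSpider G v [l₁, l₂, l₃]) (h₁ : l₁.length = 5)
    (h₂ : l₂.length = 4) (h₃ : l₃.length = 1) : Heavy G := by
  match l₁, h₁, l₂, h₂, l₃, h₃ with
  | [a₁, a₂, a₃, a₄, a₅], _, [b₁, b₂, b₃, b₄], _, [c₁], _ =>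
    have hadj := h.isChain
    simp only [List.forall_mem_cons, List.isChain_cons_cons] at hadj
    exact heavy_of_isHeavyCertificate
      (f := ![v, a₁, a₂, a₃, a₄, a₅, b₁, b₂, b₃, b₄, c₁])
      (E := [(0, 1), (1, 2), (2, 3), (3, 4), (4, 5), (0, 6), (6, 7), (7, 8), (8, 9), (0, 10)])
      (by decide) h.nodup (by simp [hadj])
      ![10, 5, 3, 2, 1, 0, 5, 3, 1, 0, 3]
      ![-2, 3, 7, 8, 6, 2, -4, -4, -3, -1, -1] (by decide +kernel)

theorem IsSpider.heavy_five_two_two (h : IsSpider G v [l₁, l₂, l₃]) (h₁ : l₁.length = 5)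
    (h₂ : l₂.length = 2) (h₃ : l₃.length = 2) : Heavy G := by
  match l₁, h₁, l₂, h₂, l₃, h₃ with
  | [a₁, a₂, a₃, a₄, a₅], _, [b₁, b₂], _, [c₁, c₂], _ =>
    have hadj := h.isChain
    simp only [List.forall_mem_cons, List.isChain_cons_cons] at hadj
    exact heavy_of_isHeavyCertificate
      (f := ![v, a₁, a₂, a₃, a₄, a₅, b₁, b₂, c₁, c₂])
      (E := [(0, 1), (1, 2), (2, 3), (3, 4), (4, 5), (0, 6), (6, 7), (0, 8), (8, 9)])
      (by decide) h.nodup (by simp [hadj])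
      ![9, 5, 2, 1, 1, 0, 4, 1, 4, 1]
      ![-2, 2, 6, 8, 6, 2, -2, -1, -2, -1] (by decide +kernel)

theorem IsSpider.heavy_four_four_two (h : IsSpider G v [l₁, l₂, l₃]) (h₁ : l₁.length = 4)
    (h₂ : l₂.length = 4) (h₃ : l₃.length = 2) : Heavy G := by
  match l₁, h₁, l₂, h₂, l₃, h₃ with
  | [a₁, a₂, a₃, a₄], _, [b₁, b₂, b₃, b₄], _, [c₁, c₂], _ =>
    have hadj := h.isChain
    simp only [List.forall_mem_cons, List.isChain_cons_cons] at hadj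
    exact heavy_of_isHeavyCertificate
      (f := ![v, a₁, a₂, a₃, a₄, b₁, b₂, b₃, b₄, c₁, c₂])
      (E := [(0, 1), (1, 2), (2, 3), (3, 4), (0, 5), (5, 6), (6, 7), (7, 8), (0, 9), (9, 10)])
      (by decide) h.nodup (by simp [hadj])
      ![20, 10, 5, 2, 1, 10, 5, 2, 1, 9, 3]
      ![0, 11, 17, 15, 6, -11, -17, -15, -6, 0, 0] (by decide +kernel)

end Spider

section Exit

variable {V : Type*} {G : SimpleGraph V}

theorem exists_adj_mem_notMem (hG : G.Connected) {S : Set V} {u v : V} (hu : u ∈ S) (hv : v ∉ S) :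
    ∃ x ∈ S, ∃ y ∉ S, G.Adj x y := by
  obtain ⟨p⟩ := hG.preconnected u v
  obtain ⟨d, -, h₁, h₂⟩ := p.exists_boundary_dart S hu hv
  exact ⟨d.fst, h₁, d.snd, h₂, d.adj⟩

theorem nodup_append_pair {l : List V} (hl : l.Nodup) {y w : V} (hy : y ∉ l) (hw : w ∉ l)
    (hyw : y ≠ w) : (l ++ [y, w]).Nodup := by
  refine hl.append (by simp [hyw]) ?_
  simp [List.disjoint_cons_right, hy, hw]

variable [Fintype V]

theorem exists_adj_mem_notMem_of_card_lt (hG : G.Connected) {S : Finset V} (hS : S.Nonempty)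
    (hcard : #S < Fintype.card V) : ∃ x ∈ S, ∃ y ∉ S, G.Adj x y := by
  obtain ⟨u, hu⟩ := hS
  obtain ⟨v, -, hv⟩ := exists_mem_notMem_of_card_lt_card (t := univ) hcard
  simpa using exists_adj_mem_notMem hG (S := S) hu hv

theorem exists_fork_or_path_of_card_add_card_lt (hG : G.Connected) {S B : Finset V}
    (hS : S.Nonempty) (hB : ∀ x ∈ S, ∀ y ∉ S, G.Adj x y → x ∈ B)
    (hcard : #S + #B < Fintype.card V) :
    (∃ b ∈ B, ∃ y ∉ S, ∃ w ∉ S, y ≠ w ∧ G.Adj b y ∧ G.Adj b w) ∨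
      ∃ b ∈ B, ∃ y ∉ S, ∃ w ∉ S, G.Adj b y ∧ G.Adj y w := by
  classical
  let N : Finset V := {y | y ∉ S ∧ ∃ b ∈ B, G.Adj b y}
  have mem_N {y : V} : y ∈ N ↔ y ∉ S ∧ ∃ b ∈ B, G.Adj b y := mem_filter_univ y
  by_cases hN : #B < #N
  · left
    choose! f hf using fun y (hy : y ∈ N) => (mem_N.1 hy).2
    obtain ⟨y, hy, w, hw, hyw, hfyw⟩ :=
      exists_ne_map_eq_of_card_lt_of_maps_to hN fun y hy => (hf y hy).1
    exact ⟨f y, (hf y hy).1, y, (mem_N.1 hy).1, w, (mem_N.1 hw).1, hyw, (hf y hy).2,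
      hfyw ▸ (hf w hw).2⟩
  · right
    have hSN : #(S ∪ N) < Fintype.card V := (card_union_le S N).trans_lt (by lia)
    obtain ⟨y, hy, w, hw, hyw⟩ :=
      exists_adj_mem_notMem_of_card_lt hG (hS.mono subset_union_left) hSN
    simp only [mem_union, not_or] at hy hw
    rcases hy with hy | hy
    · exact absurd (mem_N.2 ⟨hw.1, y, hB y hy w hw.1 hyw, hyw⟩) hw.2
    · obtain ⟨hyS, b, hb, hby⟩ := mem_N.1 hy
      exact ⟨b, hb, y, hyS, w, hw.1, hby, hyw⟩

variable [DecidableRel G.Adj]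

theorem exists_nodup_cons_cons_forall_adj {v d : V} {k : ℕ} (hd : G.Adj v d)
    (hk : k < G.degree v) :
    ∃ l : List V, l.length = k ∧ (v :: d :: l).Nodup ∧ ∀ w ∈ d :: l, G.Adj v w := by
  classical
  let l := ((G.neighborFinset v).erase d).toList.take k
  have hl : ∀ w ∈ l, w ≠ d ∧ G.Adj v w := fun w hw => by
    simpa using List.mem_of_mem_take hw
  have hadj : ∀ w ∈ d :: l, G.Adj v w := List.forall_mem_cons.2 ⟨hd, fun w hw => (hl w hw).2⟩
  refine ⟨l, ?_, ?_, hadj⟩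
  · have hcard := card_erase_add_one ((G.mem_neighborFinset v d).2 hd)
    rw [G.card_neighborFinset_eq_degree] at hcard
    rw [List.length_take, length_toList]
    lia
  · refine List.nodup_cons.2 ⟨fun hv => G.loopless.irrefl v (hadj v hv), List.nodup_cons.2 ⟨?_, ?_⟩⟩
    · exact fun hd => (hl d hd).1 rfl
    · exact (nodup_toList _).sublist (List.take_sublist _ _)

theorem length_le_degree_of_forall_adj {v : V} {l : List V} (hnd : l.Nodup)
    (h : ∀ w ∈ l, G.Adj v w) : l.length ≤ G.degree v := by
  classical
  rw [← G.card_neighborFinset_eq_degree, ← List.toFinset_card_of_nodup hnd]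
  exact card_le_card fun w hw => (G.mem_neighborFinset v w).2 (h w (List.mem_toFinset.1 hw))

end Exit

section Branching

variable {V : Type*} [Fintype V] {G : SimpleGraph V}

theorem heavy_of_four_le_degree [DecidableRel G.Adj] (hG : G.Connected)
    (hV : 12 ≤ Fintype.card V) {v : V} (hv : 4 ≤ G.degree v) : Heavy G := by
  classical
  by_cases h6 : 6 ≤ G.degree v
  · obtain ⟨d, hd⟩ := (G.degree_pos_iff_exists_adj v).1 (by lia)
    obtain ⟨l, hl, hnd, hadj⟩ := exists_nodup_cons_cons_forall_adj hd (k := 5) h6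
    match l, hl with
    | [a, b, c, e, f], _ => exact heavy_of_six_adj hnd hadj
  let S := insert v (G.neighborFinset v)
  have hS : #S = G.degree v + 1 := by
    rw [card_insert_of_notMem (G.notMem_neighborFinset_self v), G.card_neighborFinset_eq_degree]
  have hB : ∀ x ∈ S, ∀ y ∉ S, G.Adj x y → x ∈ G.neighborFinset v := by
    intro x hx y hy hxy
    rcases mem_insert.1 hx with rfl | hx
    · exact absurd (mem_insert_of_mem ((G.mem_neighborFinset x y).2 hxy)) hy
    · exact hx
  have hcard : #S + #(G.neighborFinset v) < Fintype.card V := by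
    rw [hS, G.card_neighborFinset_eq_degree]
    lia
  have exists_three {d y w : V} (hd : d ∈ G.neighborFinset v) (hy : y ∉ S) (hw : w ∉ S)
      (hyw : y ≠ w) :
      ∃ a b c, [v, d, a, b, c, y, w].Nodup ∧ ∀ w ∈ [d, a, b, c], G.Adj v w := by
    obtain ⟨l, hl, hnd, hadj⟩ :=
      exists_nodup_cons_cons_forall_adj ((G.mem_neighborFinset v d).1 hd) (k := 3) hv
    have hlS : ∀ u ∈ v :: d :: l, u ∈ S := by
      refine List.forall_mem_cons.2 ⟨mem_insert_self v _, fun u hu => ?_⟩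
      exact mem_insert_of_mem ((G.mem_neighborFinset v u).2 (hadj u hu))
    match l, hl with
    | [a, b, c], _ => exact ⟨a, b, c,
        nodup_append_pair hnd (fun h => hy (hlS y h)) (fun h => hw (hlS w h)) hyw, hadj⟩
  rcases exists_fork_or_path_of_card_add_card_lt hG (insert_nonempty v _) hB hcard with
    ⟨d, hd, y, hy, w, hw, hyw, hdy, hdw⟩ | ⟨d, hd, y, hy, w, hw, hdy, hyw⟩
  · obtain ⟨a, b, c, hnd, hadj⟩ := exists_three hd hy hw hyw
    exact heavy_of_four_adj_of_fork hnd hadj (by simp [hdy, hdw])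
  · obtain ⟨a, b, c, hnd, hadj⟩ := exists_three hd hy hw hyw.ne
    exact heavy_of_four_adj_of_path hnd hadj hdy hyw

theorem heavy_of_two_adj_claws (hG : G.Connected) (hV : 12 ≤ Fintype.card V) {u v a b c d : V}
    (hnd : [u, v, a, b, c, d].Nodup) (hu : ∀ x ∈ [v, a, b], G.Adj u x)
    (hv : ∀ x ∈ [u, c, d], G.Adj v x) : Heavy G := by
  classical
  by_contra hheavy
  have hdeg (x : V) : G.degree x < 4 := not_le.1 fun h => hheavy (heavy_of_four_le_degree hG hV h)
  let S : Finset V := [u, v, a, b, c, d].toFinset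
  let B : Finset V := [a, b, c, d].toFinset
  have hB : ∀ x ∈ S, ∀ y ∉ S, G.Adj x y → x ∈ B := by
    intro x hx y hy hxy
    have no_fourth {p q r : V} (hpqr : [y, p, q, r].Nodup)
        (hadj : ∀ z ∈ [p, q, r], G.Adj x z) : False :=
      (hdeg x).not_ge (length_le_degree_of_forall_adj hpqr (List.forall_mem_cons.2 ⟨hxy, hadj⟩))
    simp only [S, B, List.mem_toFinset, List.mem_cons] at hx hy ⊢
    rcases hx with rfl | rfl | hx
    · exact (no_fourth (by grind) hu).elim
    · exact (no_fourth (by grind) hv).elim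
    · exact hx
  have hcard : #S + #B < Fintype.card V := by
    have hS := List.toFinset_card_le [u, v, a, b, c, d]
    have hB := List.toFinset_card_le [a, b, c, d]
    simp only [List.length_cons, List.length_nil] at hS hB
    lia
  suffices ∃ l ∈ B, ∃ y ∉ S, ∃ w ∉ S, y ≠ w ∧ (G.Adj l y ∧ G.Adj l w ∨ G.Adj l y ∧ G.Adj y w) by
    obtain ⟨l, hl, y, hy, w, hw, hyw, h⟩ := this
    rw [List.mem_toFinset] at hy hw
    have hnd' : [u, v, a, b, c, d, y, w].Nodup := nodup_append_pair hnd hy hw hyw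
    simp only [B, List.mem_toFinset, List.mem_cons, List.not_mem_nil, or_false] at hl
    rcases hl with rfl | rfl | rfl | rfl
    · exact hheavy (heavy_of_two_adj_claws_of_fork_or_path hnd' hu hv h)
    · have hnd'' : [u, v, l, a, c, d, y, w].Nodup := by
        grind only [List.nodup_cons, List.mem_cons, List.not_mem_nil]
      exact hheavy (heavy_of_two_adj_claws_of_fork_or_path hnd'' (by grind) hv h)
    · have hnd'' : [v, u, l, d, a, b, y, w].Nodup := by
        grind only [List.nodup_cons, List.mem_cons, List.not_mem_nil]
      exact hheavy (heavy_of_two_adj_claws_of_fork_or_path hnd'' hv hu h)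
    · have hnd'' : [v, u, l, c, a, b, y, w].Nodup := by
        grind only [List.nodup_cons, List.mem_cons, List.not_mem_nil]
      exact hheavy (heavy_of_two_adj_claws_of_fork_or_path hnd'' (by grind) hu h)
  rcases exists_fork_or_path_of_card_add_card_lt hG ⟨u, by simp [S]⟩ hB hcard with
    ⟨l, hl, y, hy, w, hw, hyw, hly, hlw⟩ | ⟨l, hl, y, hy, w, hw, hly, hyw⟩
  · exact ⟨l, hl, y, hy, w, hw, hyw, .inl ⟨hly, hlw⟩⟩
  · exact ⟨l, hl, y, hy, w, hw, hyw.ne, .inr ⟨hly, hyw⟩⟩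

end Branching

section SpiderGrowth

variable {V : Type*} {G : SimpleGraph V} {v : V} {l₁ l₂ l₃ : List V}

theorem isSpider_three_iff : IsSpider G v [l₁, l₂, l₃] ↔ (v :: (l₁ ++ l₂ ++ l₃)).Nodup ∧
    ((v :: l₁).IsChain G.Adj ∧ (v :: l₂).IsChain G.Adj ∧ (v :: l₃).IsChain G.Adj) ∧
    l₁ ≠ [] ∧ l₂ ≠ [] ∧ l₃ ≠ [] := by
  constructor
  · rintro ⟨hnd, hchain, hne⟩
    simp_all
  · rintro ⟨hnd, hchain, hne⟩
    constructor <;> simp_all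

theorem IsSpider.append_singleton {w x : V} {s : List V} (h : IsSpider G v [s ++ [x], l₂, l₃])
    (hw : w ∉ v :: (s ++ [x] ++ l₂ ++ l₃)) (hxw : G.Adj x w) :
    IsSpider G v [s ++ [x, w], l₂, l₃] := by
  obtain ⟨hnd, ⟨h₁, h₂, h₃⟩, -, hne₂, hne₃⟩ := isSpider_three_iff.1 h
  refine isSpider_three_iff.2 ⟨?_, ⟨?_, h₂, h₃⟩, by simp, hne₂, hne₃⟩
  · have hperm : (v :: (s ++ [x, w] ++ l₂ ++ l₃)).Perm (w :: v :: (s ++ [x] ++ l₂ ++ l₃)) := by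
      simpa using List.perm_middle (l₁ := v :: s ++ [x]) (a := w) (l₂ := l₂ ++ l₃)
    exact hperm.nodup_iff.2 (List.nodup_cons.2 ⟨hw, hnd⟩)
  · exact List.isChain_cons_split.2 ⟨h₁, by simpa using hxw⟩

theorem IsSpider.heavy_of_length_eq_eleven (h : IsSpider G v [l₁, l₂, l₃])
    (hlen : l₁.length + l₂.length + l₃.length = 11) : Heavy G := by
  wlog h₁₂ : l₂.length ≤ l₁.length generalizing l₁ l₂ l₃
  · exact this (h.perm (.swap _ _ _)) (by lia) (by lia)
  wlog h₂₃ : l₃.length ≤ l₂.length generalizing l₁ l₂ l₃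
  · rcases le_total l₃.length l₁.length with h₁₃ | h₁₃
    · exact this (h.perm ((List.Perm.swap l₃ l₂ []).cons l₁)) (by lia) h₁₃ (by lia)
    · exact this (h.perm (List.perm_append_comm (l₁ := [l₁, l₂]))) (by lia) h₁₃ h₁₂
  have h₃ : 0 < l₃.length := List.length_pos_of_ne_nil (h.ne_nil l₃ (by simp))
  rcases le_or_gt 7 l₁.length with h₇ | h₇
  · exact (h.take (a := 7) (b := 1) (c := 1) (by simp) (by simp) (by simp)).heavy_seven_one_one
      (by grind) (by grind) (by grind)
  rcases le_or_gt l₁.length 4 with h₄ | h₄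
  · exact (h.take (a := 4) (b := 4) (c := 2) (by simp) (by simp) (by simp)).heavy_four_four_two
      (by grind) (by grind) (by grind)
  rcases le_or_gt 2 l₃.length with h₂ | h₂
  · exact (h.take (a := 5) (b := 2) (c := 2) (by simp) (by simp) (by simp)).heavy_five_two_two
      (by grind) (by grind) (by grind)
  · exact (h.take (a := 5) (b := 4) (c := 1) (by simp) (by simp) (by simp)).heavy_five_four_one
      (by grind) (by grind) (by grind)

variable [Fintype V]

theorem IsSpider.heavy_of_interior_exit (hG : G.Connected) (hV : 12 ≤ Fintype.card V)
    {s t : List V} {x z w : V} (h : IsSpider G v [s ++ x :: z :: t, l₂, l₃])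
    (hw : w ∉ v :: (s ++ x :: z :: t ++ l₂ ++ l₃)) (hxw : G.Adj x w) : Heavy G := by
  obtain ⟨hnd, ⟨h₁, h₂, h₃⟩, -, hne₂, hne₃⟩ := isSpider_three_iff.1 h
  obtain ⟨b, l₂, rfl⟩ := List.exists_cons_of_ne_nil hne₂
  obtain ⟨c, l₃, rfl⟩ := List.exists_cons_of_ne_nil hne₃
  have hvb : G.Adj v b := h₂.rel
  have hvc : G.Adj v c := h₃.rel
  have hxz : G.Adj x z := h₁.right_of_append (l₁ := v :: s) |>.rel
  have hnd' := List.nodup_cons.2 ⟨hw, hnd⟩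
  simp only [List.nodup_cons, List.nodup_append, List.mem_cons, List.mem_append] at hnd'
  rcases s with _ | ⟨p, s⟩
  · have hvx : G.Adj v x := h₁.rel
    have hnd'' : [v, x, b, c, z, w].Nodup := by
      grind only [List.nodup_cons, List.nodup_append, List.mem_cons, List.mem_append,
        List.not_mem_nil]
    exact heavy_of_two_adj_claws hG hV hnd'' (by simp [hvx, hvb, hvc])
      (by simp [hvx.symm, hxz, hxw])
  have hvp : G.Adj v p := h₁.rel
  rcases s.eq_nil_or_concat' with rfl | ⟨s, r, rfl⟩
  · have hxp : G.Adj x p := h₁.tail.rel.symm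
    have hnd'' : [v, p, x, b, c, z, w].Nodup := by
      grind only [List.nodup_cons, List.nodup_append, List.mem_cons, List.mem_append,
        List.not_mem_nil]
    exact heavy_of_two_claws_of_common_leaf hnd'' (by simp [hvp, hvb, hvc])
      (by simp [hxp, hxz, hxw])
  · have hrx : G.Adj r x := by
      simpa using
        List.IsChain.rel_getLast_head_of_append (l₁ := v :: p :: (s ++ [r])) h₁ (by simp) (by simp)
    have hnd'' : [v, p, b, c, x, r, z, w].Nodup := by
      grind only [List.nodup_cons, List.nodup_append, List.mem_cons, List.mem_append,
        List.not_mem_nil]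
    exact heavy_of_two_claws hnd'' (by simp [hvp, hvb, hvc]) (by simp [hrx.symm, hxz, hxw])

theorem IsSpider.exists_append_singleton_of_exit (hG : G.Connected) (hV : 12 ≤ Fintype.card V)
    (hheavy : ¬Heavy G) (h : IsSpider G v [l₁, l₂, l₃]) {x w : V} (hx : x ∈ l₁)
    (hw : w ∉ v :: (l₁ ++ l₂ ++ l₃)) (hxw : G.Adj x w) : IsSpider G v [l₁ ++ [w], l₂, l₃] := by
  obtain ⟨s, t, rfl⟩ := List.append_of_mem hx
  rcases t with _ | ⟨z, t⟩
  · simpa using h.append_singleton hw hxw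
  · exact absurd (h.heavy_of_interior_exit hG hV hw hxw) hheavy

variable [DecidableRel G.Adj]

theorem exists_isSpider_of_three_le_degree (hv : 3 ≤ G.degree v) :
    ∃ a b c, IsSpider G v [[a], [b], [c]] := by
  obtain ⟨a, ha⟩ := (G.degree_pos_iff_exists_adj v).1 (by lia)
  obtain ⟨l, hl, hnd, hadj⟩ := exists_nodup_cons_cons_forall_adj ha (k := 2) hv
  match l, hl with
  | [b, c], _ => exact ⟨a, b, c, hnd, by simpa using hadj, by simp⟩

theorem IsSpider.three_lt_degree_of_exit (h : IsSpider G v [l₁, l₂, l₃]) {w : V}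
    (hw : w ∉ v :: (l₁ ++ l₂ ++ l₃)) (hvw : G.Adj v w) : 3 < G.degree v := by
  obtain ⟨hnd, ⟨h₁, h₂, h₃⟩, hne₁, hne₂, hne₃⟩ := isSpider_three_iff.1 h
  obtain ⟨a, l₁, rfl⟩ := List.exists_cons_of_ne_nil hne₁
  obtain ⟨b, l₂, rfl⟩ := List.exists_cons_of_ne_nil hne₂
  obtain ⟨c, l₃, rfl⟩ := List.exists_cons_of_ne_nil hne₃
  have hnd' : [w, a, b, c].Nodup := by grind
  exact length_le_degree_of_forall_adj hnd' (by simp [hvw, h₁.rel, h₂.rel, h₃.rel])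

theorem exists_isSpider_length_eq (hG : G.Connected) (hV : 12 ≤ Fintype.card V)
    (hheavy : ¬Heavy G) (hv : 3 ≤ G.degree v) {k : ℕ} (hk₃ : 3 ≤ k) (hk : k < Fintype.card V) :
    ∃ l₁ l₂ l₃, IsSpider G v [l₁, l₂, l₃] ∧ l₁.length + l₂.length + l₃.length = k := by
  classical
  induction k, hk₃ using Nat.le_induction with
  | base =>
    obtain ⟨a, b, c, h⟩ := exists_isSpider_of_three_le_degree hv
    exact ⟨[a], [b], [c], h, rfl⟩
  | succ k _ ih =>
    obtain ⟨l₁, l₂, l₃, h, hlen⟩ := ih (by lia)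
    let S : Finset V := (v :: (l₁ ++ l₂ ++ l₃)).toFinset
    have hS : #S < Fintype.card V := (List.toFinset_card_le _).trans_lt <| by
      simp only [List.length_cons, List.length_append]
      lia
    obtain ⟨x, hx, w, hw, hxw⟩ := exists_adj_mem_notMem_of_card_lt hG ⟨v, by simp [S]⟩ hS
    simp only [S, List.mem_toFinset, List.mem_cons, List.mem_append] at hx
    rw [List.mem_toFinset] at hw
    rcases hx with rfl | (hx | hx) | hx
    · exact absurd (heavy_of_four_le_degree hG hV (h.three_lt_degree_of_exit hw hxw)) hheavy
    · refine ⟨_, _, _, h.exists_append_singleton_of_exit hG hV hheavy hx hw hxw, ?_⟩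
      grind
    · have h' : IsSpider G v [l₂, l₁, l₃] := h.perm (.swap _ _ _)
      refine ⟨_, _, _, h'.exists_append_singleton_of_exit hG hV hheavy hx (by grind) hxw, ?_⟩
      grind
    · have h' : IsSpider G v [l₃, l₁, l₂] := h.perm (List.perm_append_comm (l₁ := [l₁, l₂]))
      refine ⟨_, _, _, h'.exists_append_singleton_of_exit hG hV hheavy hx (by grind) hxw, ?_⟩
      grind

theorem heavy_of_three_le_degree (hG : G.Connected) (hV : 12 ≤ Fintype.card V)
    (hv : 3 ≤ G.degree v) : Heavy G := by
  by_contra hheavy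
  obtain ⟨l₁, l₂, l₃, h, hlen⟩ :=
    exists_isSpider_length_eq hG hV hheavy hv (k := 11) (by simp) (by lia)
  exact hheavy (h.heavy_of_length_eq_eleven hlen)

end SpiderGrowth

section HamiltonianPath

variable {V : Type*} [Fintype V] {G : SimpleGraph V} [DecidableRel G.Adj]

theorem not_adj_interior_of_degree_le_two (hdeg : ∀ v, G.degree v ≤ 2) {s t : List V}
    {p x q w : V} (hl : (s ++ [p, x, q] ++ t).Nodup) (hchain : (s ++ [p, x, q] ++ t).IsChain G.Adj)
    (hw : w ∉ s ++ [p, x, q] ++ t) : ¬G.Adj x w := by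
  intro hxw
  have hpxq := hchain.left_of_append.right_of_append
  have hnd : [w, p, q].Nodup := by grind
  have h3 := length_le_degree_of_forall_adj (G := G) (v := x) hnd
    (by simp [hxw, hpxq.rel.symm, hpxq.tail.rel])
  exact absurd (hdeg x) (Nat.not_le.2 h3)

theorem exists_nodup_isChain_length_eq (hG : G.Connected) (hdeg : ∀ v, G.degree v ≤ 2) {k : ℕ}
    (hk₁ : 1 ≤ k) (hk : k ≤ Fintype.card V) :
    ∃ l : List V, l.Nodup ∧ l.IsChain G.Adj ∧ l.length = k := by
  classical
  induction k, hk₁ using Nat.le_induction with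
  | base =>
    obtain ⟨v⟩ := hG.nonempty
    exact ⟨[v], by simp, by simp, rfl⟩
  | succ k hk₁ ih =>
    obtain ⟨l, hl, hchain, hlen⟩ := ih (by lia)
    have hS : #l.toFinset < Fintype.card V := (List.toFinset_card_le l).trans_lt (by lia)
    have hne : l.toFinset.Nonempty := List.toFinset_nonempty_iff l |>.2 (by grind)
    obtain ⟨x, hx, w, hw, hxw⟩ := exists_adj_mem_notMem_of_card_lt hG hne hS
    rw [List.mem_toFinset] at hx hw
    obtain ⟨s, t, rfl⟩ := List.append_of_mem hx
    rcases t with _ | ⟨q, t⟩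
    · refine ⟨s ++ [x] ++ [w], hl.append (by simp) (by simpa using hw), ?_, by simpa using hlen⟩
      exact hchain.append (by simp) (by simpa using hxw)
    rcases s.eq_nil_or_concat' with rfl | ⟨s, p, rfl⟩
    · exact ⟨w :: x :: q :: t, List.nodup_cons.2 ⟨hw, hl⟩, hchain.cons_cons hxw.symm,
        by simpa using hlen⟩
    · rw [show s ++ [p] ++ x :: q :: t = s ++ [p, x, q] ++ t by simp] at hl hchain hw
      exact absurd hxw (not_adj_interior_of_degree_le_two hdeg hl hchain hw)

theorem exists_pathGraph_le_comap {n : ℕ} (hG : G.Connected) (hdeg : ∀ v, G.degree v ≤ 2)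
    (hn : Fintype.card V = n) : ∃ σ : Fin n ≃ V, SimpleGraph.pathGraph n ≤ G.comap σ := by
  have : Nonempty V := hG.nonempty
  obtain ⟨l, hl, hchain, hlen⟩ :=
    exists_nodup_isChain_length_eq hG hdeg Fintype.card_pos le_rfl
  obtain rfl := hlen.trans hn
  have hbij : Function.Bijective l.get :=
    (Fintype.bijective_iff_injective_and_card _).2 ⟨hl.injective_get, by simp [hlen]⟩
  refine ⟨.ofBijective l.get hbij, fun i j hij => ?_⟩
  have adj_succ (i j : Fin l.length) (h : i.val + 1 = j) : G.Adj (l.get i) (l.get j) := by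
    simpa [h] using List.isChain_iff_getElem.1 hchain i (by lia)
  rcases SimpleGraph.pathGraph_adj.1 hij with h | h
  · exact adj_succ i j h
  · exact (adj_succ j i h).symm

end HamiltonianPath

section PathGraph

variable {n : ℕ} [DecidableRel (SimpleGraph.pathGraph n).Adj]

theorem degree_pathGraph_le_two (v : Fin n) : (SimpleGraph.pathGraph n).degree v ≤ 2 := by
  rw [← SimpleGraph.card_neighborFinset_eq_degree, ← card_map Fin.valEmbedding]
  refine (card_le_card (t := {v.val - 1, v.val + 1}) fun k hk => ?_).trans card_le_two
  simp only [mem_map, SimpleGraph.mem_neighborFinset, SimpleGraph.pathGraph_adj,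
    Fin.valEmbedding_apply] at hk
  grind

theorem degree_pathGraph_zero_lt_two [NeZero n] : (SimpleGraph.pathGraph n).degree 0 < 2 := by
  rw [← SimpleGraph.card_neighborFinset_eq_degree, ← card_map Fin.valEmbedding, Nat.lt_succ_iff]
  refine (card_le_card (t := {1}) fun k hk => ?_).trans (card_singleton 1).le
  simp only [mem_map, SimpleGraph.mem_neighborFinset, SimpleGraph.pathGraph_adj,
    Fin.valEmbedding_apply] at hk
  grind

variable {α : ℝ}

theorem Sk_Aalpha_pathGraph_two_lt_four (hn : 2 ≤ n) (hα : α < 1) :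
    Sk (Aalpha α (SimpleGraph.pathGraph n)) 2 < 4 := by
  have : NeZero n := ⟨by lia⟩
  have h := Sk_Aalpha_two_lt hn ⟨SimpleGraph.pathGraph_preconnected n⟩ hα degree_pathGraph_le_two
    degree_pathGraph_zero_lt_two
  exact h.trans_eq (by norm_num)

theorem Sk_Aalpha_pathGraph_two_lt_of_degree_le_two {G : SimpleGraph (Fin n)} [DecidableRel G.Adj]
    (hn : 2 ≤ n) (hG : G.Connected) (hdeg : ∀ v, G.degree v ≤ 2)
    (hiso : IsEmpty (G ≃g SimpleGraph.pathGraph n)) (hα₀ : 1 / 2 ≤ α) (hα₁ : α < 1) :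
    Sk (Aalpha α (SimpleGraph.pathGraph n)) 2 < Sk (Aalpha α G) 2 := by
  have : NeZero n := ⟨by lia⟩
  obtain ⟨σ, hle⟩ := exists_pathGraph_le_comap hG hdeg (Fintype.card_fin n)
  have hne : SimpleGraph.pathGraph n ≠ G.comap σ := fun h =>
    hiso.false (h ▸ (SimpleGraph.Iso.comap σ G).symm)
  calc Sk (Aalpha α (SimpleGraph.pathGraph n)) 2 < Sk (Aalpha α (G.comap σ)) 2 :=
        Sk_Aalpha_two_lt_of_lt hn ⟨SimpleGraph.pathGraph_preconnected n⟩ (hle.lt_of_ne hne) hα₀ hα₁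
          degree_pathGraph_le_two degree_pathGraph_zero_lt_two
    _ = Sk (Aalpha α G) 2 := Sk_Aalpha_eq_of_iso (SimpleGraph.Iso.comap σ G) hα₀ hα₁.le hn

end PathGraph

theorem stmt18 {n : ℕ} (hn : 12 ≤ n)
    (G : SimpleGraph (Fin n)) [DecidableRel G.Adj] (hG : G.Connected)
    [DecidableRel (SimpleGraph.pathGraph n).Adj]
    (α : ℝ) (hα0 : 1 / 2 ≤ α) (hα1 : α < 1) :
    Sk (Aalpha α G) 2 ≥ Sk (Aalpha α (SimpleGraph.pathGraph n)) 2 ∧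
      (Sk (Aalpha α G) 2 = Sk (Aalpha α (SimpleGraph.pathGraph n)) 2 ↔
        Nonempty (G ≃g SimpleGraph.pathGraph n)) := by
  have hn₂ : 2 ≤ n := by lia
  rcases isEmpty_or_nonempty (G ≃g SimpleGraph.pathGraph n) with hiso | ⟨⟨e⟩⟩
  · suffices hlt : Sk (Aalpha α (SimpleGraph.pathGraph n)) 2 < Sk (Aalpha α G) 2 from
      ⟨hlt.le, fun h => absurd h hlt.ne', fun ⟨e⟩ => hiso.elim e⟩
    by_cases hdeg : ∀ v, G.degree v ≤ 2
    · exact Sk_Aalpha_pathGraph_two_lt_of_degree_le_two hn₂ hG hdeg hiso hα0 hα1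
    · obtain ⟨v, hv⟩ := not_forall.1 hdeg
      have hheavy : Heavy G := heavy_of_three_le_degree hG (by simpa using hn) (not_le.1 hv)
      exact (Sk_Aalpha_pathGraph_two_lt_four hn₂ hα1).trans_le (hheavy.four_le_Sk hα0 hα1.le)
  · have heq := Sk_Aalpha_eq_of_iso e hα0 hα1.le hn₂
    exact ⟨heq.ge, fun _ => ⟨e⟩, fun _ => heq⟩
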